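/- For every natural number l with l > 1, one has K 0 l = 0. -/

import Mathlib

/-- The Bernoulli–Euler (zigzag, up-down) numbers: `A 0 = 1`, `A 1 = 1`, and
`2 * A (n+1) = ∑ k in range (n+1), (n.choose k) * A k * A (n-k)`. -/
def A : ℕ → ℕ
  | 0 => 1
  | 1 => 1
  | n + 2 =>
      (∑ k ∈ (Finset.range (n + 2)).attach,
        Nat.choose (n + 1) k.1 * A k.1 * A (n + 1 - k.1)) / 2
decreasing_by
  · have := Finset.mem_range.mp k.2; omega
  · have := Finset.mem_range.mp k.2; omega

/-- `K n l` : number of connected components of the space of very nice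
M-morsifications of the multiboundary singularity `B_n^l`, extended by the
recurrence `K n (l+1) = K (n+2) l − (n+2)·l·K (n+2) (l−1)` for `l ≥ 1`,
with `K n 0 = A (n-1)` for `n ≥ 1`, `K n 0 = 0` for `n ≤ 0`,
and `K n 1 = K (n+2) 0`. -/
def K : ℤ → ℕ → ℤ
  | n, 0 => if 1 ≤ n then (A (n - 1).toNat : ℤ) else 0
  | n, 1 => K (n + 2) 0
  | n, (l + 2) => K (n + 2) (l + 1) - (n + 2) * (l + 1) * K (n + 2) l

namespace KZR

open Finset

abbrev M := MvPolynomial (Fin 2) ℤ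

noncomputable def y : M := MvPolynomial.X 0
noncomputable def z : M := MvPolynomial.X 1

/-- The derivation with `y ↦ z²`, `z ↦ y z` (formally `y = tan`, `z = sec`). -/
noncomputable def D : Derivation ℤ M M :=
  MvPolynomial.mkDerivation ℤ ![z ^ 2, y * z]

lemma D_y : D y = z ^ 2 := by simp [D, y, MvPolynomial.mkDerivation_X]
lemma D_z : D z = y * z := by
  unfold D
  conv_lhs => rw [z]
  rw [MvPolynomial.mkDerivation_X]; rfl

lemma D_mul (a b : M) : D (a * b) = a * D b + D a * b := by
  rw [Derivation.leibniz]; simp [mul_comm]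

lemma leib (n : ℕ) (a b : M) :
    D^[n] (a * b) = ∑ k ∈ range (n + 1), (n.choose k : M) * (D^[k] a * D^[n - k] b) := by
  induction n with
  | zero => simp
  | succ n ih =>
    rw [sum_choose_succ_mul (fun i j => D^[i] a * D^[j] b) n, Function.iterate_succ_apply', ih,
      map_sum, ← sum_add_distrib]
    refine sum_congr rfl fun k hk => ?_
    have hk' : n + 1 - k = (n - k) + 1 := by have := mem_range.mp hk; omega
    have hc : D ((n.choose k : ℕ) : M) = 0 := by
      simp
    rw [D_mul, hc, D_mul]
    simp only [hk', Function.iterate_succ_apply']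
    ring

noncomputable def ev : M →+* ℤ := MvPolynomial.eval ![0, 1]
lemma ev_y : ev y = 0 := by simp [ev, y]
lemma ev_z : ev z = 1 := by simp [ev, z]

noncomputable def sg : M →ₐ[ℤ] M := MvPolynomial.aeval ![-y, z]
lemma sg_y : sg y = - y := by
  unfold sg; conv_lhs => rw [y]
  rw [MvPolynomial.aeval_X]; rfl
lemma sg_z : sg z = z := by
  unfold sg; conv_lhs => rw [z]
  rw [MvPolynomial.aeval_X]; rfl

lemma sg_D (p : M) : sg (D p) = - D (sg p) := by
  induction p using MvPolynomial.induction_on with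
  | C a => simp [D]
  | add p q hp hq => simp only [map_add, hp, hq]; ring
  | mul_X p i hp =>
    rw [D_mul, map_add, map_mul, map_mul, map_mul, hp, D_mul]
    have : sg (D (MvPolynomial.X i)) = - D (sg (MvPolynomial.X i)) := by
      fin_cases i
      · change sg (D y) = - D (sg y)
        rw [D_y, sg_y, map_neg, D_y, map_pow, sg_z]; ring
      · change sg (D z) = - D (sg z)
        rw [D_z, sg_z, D_z, map_mul, sg_z, sg_y]; ring
    rw [this]; ring

lemma sg_iter (n : ℕ) : sg (D^[n] z) = (-1) ^ n * D^[n] z := by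
  induction n with
  | zero => simp [sg_z]
  | succ n ih =>
    rw [Function.iterate_succ_apply', sg_D, ih, D_mul]
    have : D ((-1 : M) ^ n) = 0 := by
      rcases neg_one_pow_eq_or M n with h | h <;> rw [h] <;> simp
    rw [this]; ring

lemma ev_sg (p : M) : ev (sg p) = ev p := by
  induction p using MvPolynomial.induction_on with
  | C a => simp
  | add p q hp hq => simp only [map_add, hp, hq]
  | mul_X p i hp =>
    rw [map_mul, map_mul, map_mul, hp]
    congr 1
    fin_cases i
    · change ev (sg y) = ev y
      rw [sg_y, map_neg, ev_y]; rfl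
    · change ev (sg z) = ev z
      rw [sg_z]

lemma ev_odd (n : ℕ) : ev (D^[2 * n + 1] z) = 0 := by
  have h := ev_sg (D^[2 * n + 1] z)
  rw [sg_iter, map_mul, map_pow, map_neg, map_one, pow_succ, pow_mul, neg_one_sq, one_pow, one_mul] at h
  linarith

lemma iter_add (n : ℕ) (a b : M) : D^[n] (a + b) = D^[n] a + D^[n] b :=
  iterate_map_add D n a b

lemma rec_f (n : ℕ) : 2 * D^[n + 2] (y + z) = D^[n + 1] ((y + z) * (y + z)) := by
  have h1 : D (y + z) + D (y + z) = (y + z) * (y + z) + (z * z - y * y) := by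
    rw [map_add, D_y, D_z]; ring
  have h2 : D (z * z - y * y) = 0 := by
    rw [map_sub, D_mul, D_mul, D_y, D_z]; ring
  have h3 : D^[n + 1] (z * z - y * y) = 0 := by
    rw [Function.iterate_succ_apply, h2, iterate_map_zero]
  have h4 := congrArg (D^[n + 1]) h1
  rw [iter_add, iter_add, h3, ← Function.iterate_succ_apply (f := D)] at h4
  rw [two_mul]; simpa using h4

lemma A_eq (n : ℕ) : (A n : ℤ) = ev (D^[n] (y + z)) := by
  induction n using Nat.strong_induction_on with
  | _ n ih =>
    match n with
    | 0 => simp [A, ev_y, ev_z]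
    | 1 => simp [A, ev_y, ev_z, D_y, D_z]
    | n + 2 =>
      have h := congrArg ev (rec_f n)
      rw [leib, map_mul, map_sum] at h
      rw [A, sum_attach (range (n + 2))
        (fun k => Nat.choose (n + 1) k * A k * A (n + 1 - k))]
      push_cast
      have : ∑ k ∈ range (n + 2), ((n + 1).choose k : ℤ) * A k * A (n + 1 - k)
          = 2 * ev (D^[n + 2] (y + z)) := by
        rw [show ev 2 = 2 from map_ofNat ev 2] at h
        rw [h]
        refine sum_congr rfl fun k hk => ?_
        have := mem_range.mp hk
        rw [ih k (by omega), ih (n + 1 - k) (by omega), map_mul, map_mul, map_natCast]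
        ring
      rw [this]; simp

open Polynomial in
/-- `P n` is the polynomial with `D^n tan = P n (tan)`. -/
noncomputable def P : ℕ → ℤ[X]
  | 0 => X
  | n + 1 => (1 + X ^ 2) * derivative (P n)

lemma D_aeval (p : Polynomial ℤ) :
    D (Polynomial.aeval y p) = Polynomial.aeval y (Polynomial.derivative p) * z ^ 2 := by
  rw [Derivation.map_aeval, D_y, smul_eq_mul]

lemma P_spec (n : ℕ) : ∃ q, D^[n] y = Polynomial.aeval y (P n) + (z * z - y * y - 1) * q := by
  induction n with
  | zero => exact ⟨0, by simp [P]⟩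
  | succ n ih =>
    obtain ⟨q, hq⟩ := ih
    refine ⟨Polynomial.aeval y (Polynomial.derivative (P n)) + D q, ?_⟩
    have h2 : D (z * z - y * y - 1) = 0 := by
      rw [map_sub, map_sub, D_mul, D_mul, D_y, D_z, Derivation.map_one_eq_zero]; ring
    rw [Function.iterate_succ_apply', hq, map_add, D_mul, h2, D_aeval, P]
    simp only [map_mul, map_add, map_one, map_pow, Polynomial.aeval_X]
    ring

lemma A_odd (n : ℕ) : (A (2 * n + 1) : ℤ) = (P (2 * n + 1)).coeff 0 := by
  obtain ⟨q, hq⟩ := P_spec (2 * n + 1)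
  rw [A_eq, iter_add, map_add, ev_odd, hq, map_add, map_mul, map_sub, map_sub, map_mul, map_mul,
    ev_y, ev_z, map_one]
  have : ev (Polynomial.aeval y (P (2 * n + 1))) = (P (2 * n + 1)).eval 0 := by
    rw [← ev_y, Polynomial.aeval_def, Polynomial.hom_eval₂, Polynomial.eval]
    congr 1
    exact RingHom.ext_int _ _
  rw [this, Polynomial.coeff_zero_eq_eval_zero]; ring

lemma P_deg (n : ℕ) : (P n).natDegree ≤ n + 1 := by
  induction n with
  | zero => simp [P]
  | succ n ih =>
    rw [P]
    refine Polynomial.natDegree_mul_le.trans ?_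
    have h1 : (1 + Polynomial.X ^ 2 : Polynomial ℤ).natDegree ≤ 2 := by compute_degree
    have h2 := Polynomial.natDegree_derivative_le (P n)
    omega

open PowerSeries in
lemma exV : ∃ V : ℤ⟦X⟧, (1 + X ^ 2) * V = 1 :=
  ⟨invOfUnit (1 + X ^ 2) 1, mul_invOfUnit _ _ (by simp)⟩

open PowerSeries in
lemma dV (V : ℤ⟦X⟧) (hV : (1 + X ^ 2) * V = 1) : d⁄dX ℤ V = - 2 * X * V ^ 2 := by
  have h := congrArg (d⁄dX ℤ) hV
  have hX : d⁄dX ℤ (X ^ 2 : ℤ⟦X⟧) = 2 * X := by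
    rw [pow_two, Derivation.leibniz, derivative_X]; simp; ring
  rw [Derivation.leibniz, map_add, hX, Derivation.map_one_eq_zero, smul_eq_mul, smul_eq_mul] at h
  linear_combination V * h - (d⁄dX ℤ V) * hV

open PowerSeries in
/-- One step of the recurrence. -/
lemma dstep (V : ℤ⟦X⟧) (hV : (1 + X ^ 2) * V = 1) (i k : ℕ) :
    d⁄dX ℤ (V ^ (i + 1) * (P k : ℤ⟦X⟧)) =
      V ^ (i + 2) * (P (k + 1) : ℤ⟦X⟧) - C (2 * (i : ℤ) + 2) * (X * (V ^ (i + 2) * (P k : ℤ⟦X⟧))) := by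
  rw [Derivation.leibniz, derivative_pow, dV V hV, derivative_coe, P]
  simp only [smul_eq_mul, Polynomial.coe_mul, Polynomial.coe_add, Polynomial.coe_one,
    Polynomial.coe_pow, Polynomial.coe_X]
  have : (C (2 * (i : ℤ) + 2) : ℤ⟦X⟧) = 2 * (i : ℤ⟦X⟧) + 2 := by
    simp
  rw [this]
  push_cast
  linear_combination (- V ^ (i + 1) * ((Polynomial.derivative (P k) : Polynomial ℤ) : ℤ⟦X⟧)) * hV

open PowerSeries in
lemma cstep (V : ℤ⟦X⟧) (hV : (1 + X ^ 2) * V = 1) (i k l : ℕ) :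
    ((l + 2).factorial : ℤ) * coeff (l + 2) (V ^ (i + 1) * (P k : ℤ⟦X⟧)) =
      ((l + 1).factorial : ℤ) * coeff (l + 1) (V ^ (i + 2) * (P (k + 1) : ℤ⟦X⟧))
      - (2 * i + 2) * (l + 1) * (l.factorial * coeff l (V ^ (i + 2) * (P k : ℤ⟦X⟧))) := by
  have h := congrArg (coeff (l + 1)) (dstep V hV i k)
  rw [coeff_derivative, map_sub, coeff_C_mul, coeff_succ_X_mul] at h
  rw [Nat.factorial_succ (l + 1), Nat.factorial_succ l]
  push_cast at h ⊢
  linear_combination ((l : ℤ) + 1) * l.factorial * h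

open PowerSeries in
lemma cstep0 (V : ℤ⟦X⟧) (hV : (1 + X ^ 2) * V = 1) (i k : ℕ) :
    coeff 1 (V ^ (i + 1) * (P k : ℤ⟦X⟧)) = coeff 0 (V ^ (i + 2) * (P (k + 1) : ℤ⟦X⟧)) := by
  have h := congrArg (coeff 0) (dstep V hV i k)
  rw [coeff_derivative, map_sub, coeff_C_mul, coeff_zero_X_mul] at h
  simpa using h

open PowerSeries in
lemma K_eq (V : ℤ⟦X⟧) (hV : (1 + X ^ 2) * V = 1) (l : ℕ) : ∀ i : ℕ,
    K (2 * i + 2) l = l.factorial * coeff l (V ^ (i + 2) * (P (2 * i + 1 + l) : ℤ⟦X⟧)) := by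
  have hV0 : constantCoeff V = 1 := by
    have := congrArg constantCoeff hV
    simpa using this
  have h0 : ∀ i : ℕ, K (2 * i + 2) 0
      = coeff 0 (V ^ (i + 2) * (P (2 * i + 1) : ℤ⟦X⟧)) := by
    intro i
    rw [K, if_pos (by omega), show (2 * (i : ℤ) + 2 - 1).toNat = 2 * i + 1 by omega, A_odd]
    rw [coeff_zero_eq_constantCoeff_apply, map_mul, map_pow, hV0,
      ← coeff_zero_eq_constantCoeff_apply, Polynomial.coeff_coe]
    simp
  induction l using Nat.strong_induction_on with
  | _ l ih =>
    intro i
    match l with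
    | 0 => rw [h0]; simp
    | 1 =>
      rw [K, cstep0 V hV]
      have := h0 (i + 1)
      push_cast at this
      rw [show 2 * (i : ℤ) + 2 + 2 = 2 * (i + 1) + 2 by ring, this]
      rw [Nat.factorial_one, Nat.cast_one, one_mul]
      rfl
    | l + 2 =>
      have h1 := ih (l + 1) (by omega) (i + 1)
      have h2 := ih l (by omega) (i + 1)
      push_cast at h1 h2
      rw [K, show 2 * (i : ℤ) + 2 + 2 = 2 * (i + 1) + 2 by ring, h1, h2, cstep V hV (i + 1)]
      rw [show 2 * (i + 1) + 1 + (l + 1) = 2 * i + 1 + (l + 2) + 1 by ring,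
        show 2 * (i + 1) + 1 + l = 2 * i + 1 + (l + 2) by ring]
      push_cast
      ring

end KZR

/-- For `l > 1`, `K 0 l = 0`. -/
theorem K_zero_row (l : ℕ) (hl : 1 < l) : K 0 l = 0 := by
  obtain ⟨m, rfl⟩ : ∃ m, l = m + 2 := ⟨l - 2, by omega⟩
  obtain ⟨V, hV⟩ := KZR.exV
  have h1 := KZR.K_eq V hV (m + 1) 0
  have h2 := KZR.K_eq V hV m 0
  have h3 := KZR.cstep V hV 0 (m + 1) m
  have e1 : 2 * 0 + 1 + (m + 1) = m + 1 + 1 := by ring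
  have e2 : 2 * 0 + 1 + m = m + 1 := by ring
  rw [e1] at h1
  rw [e2] at h2
  have h4 : V ^ (0 + 1) * (KZR.P (m + 1) : PowerSeries ℤ)
      = ((Polynomial.derivative (KZR.P m) : Polynomial ℤ) : PowerSeries ℤ) := by
    rw [KZR.P]
    simp only [Polynomial.coe_mul, Polynomial.coe_add, Polynomial.coe_one,
      Polynomial.coe_pow, Polynomial.coe_X]
    linear_combination ((Polynomial.derivative (KZR.P m) : Polynomial ℤ) : PowerSeries ℤ) * hV
  have h5 : (Polynomial.derivative (KZR.P m)).coeff (m + 2) = 0 := by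
    apply Polynomial.coeff_eq_zero_of_natDegree_lt
    have := Polynomial.natDegree_derivative_le (KZR.P m)
    have := KZR.P_deg m
    omega
  rw [h4, Polynomial.coeff_coe, h5] at h3
  have e3 : (2 * ((0 : ℕ) : ℤ) + 2) = 0 + 2 := by norm_num
  rw [e3] at h1 h2 h3
  rw [K, h1, h2]
  linear_combination -h3
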